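/- There exists a filter-equivariant function f : List ℕ → List ℕ that acts as the identity on every two-element list with distinct entries (f [x, y] = [x, y] whenever x ≠ y) but is not the identity function; for instance, the function that, for each distinct value x of the input xs taken in order of first occurrence, outputs (xs.count x)^2 copies of x, satisfies f [4, 7, 4, 7, 8] = [4, 4, 4, 4, 7, 7, 7, 7, 8]. Hence a general filter-equivariant function is not determined by its values on two-element lists with distinct entries. -/

import Mathlib

/-- A function `f : List ℕ → List ℕ` is filter-equivariant if it commutes with
`List.filter p` for every Boolean predicate `p`. -/
def FilterEquivariant (f : List ℕ → List ℕ) : Prop :=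
  ∀ (p : ℕ → Bool) (xs : List ℕ), f (xs.filter p) = (f xs).filter p

/-- The distinct values of a list, in order of first occurrence. -/
def firstOccs : List ℕ → List ℕ
  | [] => []
  | x :: xs => x :: (firstOccs xs).filter (fun y => decide (y ≠ x))

theorem firstOccs_filter (p : ℕ → Bool) (xs : List ℕ) :
    firstOccs (xs.filter p) = (firstOccs xs).filter p := by
  induction xs with
  | nil => rfl
  | cons x xs ih =>
    by_cases h : p x = true
    · simp only [List.filter_cons, h, if_true, firstOccs, ih, List.filter_filter]
      simp only [Bool.and_comm]
    · simp only [List.filter_cons, h, firstOccs, ih, List.filter_filter]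
      simp only [Bool.false_eq_true, if_false]
      rw [ih]
      apply List.filter_congr
      intro y _
      by_cases hy : y = x
      · subst hy; simpa using h
      · simp [hy]

/-- Each distinct value `x`, in order of first occurrence, repeated `(xs.count x)^2` times. -/
def squareCounts (xs : List ℕ) : List ℕ :=
  (firstOccs xs).flatMap (fun x => List.replicate ((xs.count x) ^ 2) x)

theorem squareCounts_equivariant : FilterEquivariant squareCounts := by
  intro p xs
  unfold squareCounts
  rw [firstOccs_filter]
  induction firstOccs xs with
  | nil => rfl
  | cons x l ih =>
    by_cases h : p x = true
    · simp [List.filter_cons, h, ih, List.filter_append, List.filter_replicate,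
        List.count_filter]
    · simp [List.filter_cons, h, ih, List.filter_append, List.filter_replicate]

theorem exists_filterEquivariant_id_on_distinct_pairs_not_id :
    ∃ f : List ℕ → List ℕ, FilterEquivariant f ∧
      (∀ x y : ℕ, x ≠ y → f [x, y] = [x, y]) ∧
      f ≠ id ∧
      f [4, 7, 4, 7, 8] = [4, 4, 4, 4, 7, 7, 7, 7, 8] := by
  refine ⟨squareCounts, squareCounts_equivariant, ?_, ?_, by decide⟩
  · intro x y h
    simp [squareCounts, firstOccs, h, h.symm, List.count_cons]
  · intro h
    have h2 := congrFun h [0, 0]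
    revert h2
    decide
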